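/- The free product ℤ/2 * ℤ/2 * ℤ/2 modulo the braid relations between each pair of generators (⟨a,b⟩ = ⟨b,c⟩ = ⟨c,a⟩ = e) is isomorphic to an extension of S₄: specifically, the group ⟨a, b, c | a², b², c², aba = bab, bcb = cbc, cac = aca⟩ surjects onto S₄ via a ↦ (1 2), b ↦ (2 3), c ↦ (2 4), and the kernel of this surjection is a free abelian group of finite rank. -/

import Mathlib

def stmt19Rels : Set (FreeGroup (Fin 3)) :=
  { (FreeGroup.of 0) ^ 2, (FreeGroup.of 1) ^ 2, (FreeGroup.of 2) ^ 2,
    FreeGroup.of 0 * FreeGroup.of 1 * FreeGroup.of 0 *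
      (FreeGroup.of 1 * FreeGroup.of 0 * FreeGroup.of 1)⁻¹,
    FreeGroup.of 1 * FreeGroup.of 2 * FreeGroup.of 1 *
      (FreeGroup.of 2 * FreeGroup.of 1 * FreeGroup.of 2)⁻¹,
    FreeGroup.of 2 * FreeGroup.of 0 * FreeGroup.of 2 *
      (FreeGroup.of 0 * FreeGroup.of 2 * FreeGroup.of 0)⁻¹ }

/-!
The presented group is the affine Weyl group of type `Ã₂`. Its translation subgroup `T` is generated
by `t = a(bcb)` and `v = b(aca)`, products of reflections in parallel lines; it is normal, and
`c = batb`, so the group is `T ⋅ ⟨a, b⟩` with `⟨a, b⟩` of order six. The reflection representation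
on `ℤ³` shows that `T` is free abelian of rank two. In `S₄` the elements `t` and `v` generate the
Klein four-group, which is simply transitive on the four points, while `a` and `b` fix the last
point. Hence if `tⁱvʲw` with `w ∈ ⟨a, b⟩` acts trivially, looking at that point forces `i` and `j`
to be even, and then `w = 1`: the kernel is `T²`.
-/

/-- The affine Weyl group of type `Ã₂`, in its Coxeter presentation. -/
abbrev TriangleGroup : Type := PresentedGroup stmt19Rels

namespace TriangleGroup

open Equiv Subgroup

/-- The Coxeter generators `a = gen 0`, `b = gen 1`, `c = gen 2`. -/
abbrev gen (i : Fin 3) : TriangleGroup := PresentedGroup.of i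

section Generalities

variable {H : Type*} [Group H]

/-- The homomorphism `ℤ² → H`, `(i, j) ↦ xⁱyʲ`, attached to two commuting elements. -/
def zpowPairHom {x y : H} (h : Commute x y) : Multiplicative (Fin 2 → ℤ) →* H where
  toFun n := x ^ n.toAdd 0 * y ^ n.toAdd 1
  map_one' := by simp
  map_mul' m n := by
    simp only [toAdd_mul, Pi.add_apply, zpow_add]
    exact ((h.zpow_zpow _ _).mul_mul_mul_comm _ _)

theorem zpowPairHom_apply {x y : H} (h : Commute x y) (n : Multiplicative (Fin 2 → ℤ)) :
    zpowPairHom h n = x ^ n.toAdd 0 * y ^ n.toAdd 1 := rfl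

theorem zpowPairHom_sq_eq_one {x y : H} (h : Commute x y) (hx : x ^ 2 = 1) (hy : y ^ 2 = 1)
    (n : Multiplicative (Fin 2 → ℤ)) : zpowPairHom h (n ^ 2) = 1 := by
  have hzpow {z : H} (hz : z ^ 2 = 1) (i : ℤ) : (z ^ i) ^ 2 = 1 := by
    rw [← zpow_natCast, zpow_comm, zpow_natCast, hz, one_zpow]
  rw [map_pow, zpowPairHom_apply, (h.zpow_zpow _ _).mul_pow, hzpow hx, hzpow hy, one_mul]

theorem closure_pair_le_range_zpowPairHom {x y : H} (h : Commute x y) :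
    Subgroup.closure {x, y} ≤ (zpowPairHom h).range := by
  rw [closure_le, Set.pair_subset_iff]
  exact ⟨⟨.ofAdd ![1, 0], by simp [zpowPairHom_apply]⟩,
    ⟨.ofAdd ![0, 1], by simp [zpowPairHom_apply]⟩⟩

theorem mem_normalizer_closure_of_mul_self {g : H} {s : Set H} (hg : g * g = 1)
    (h : ∀ x ∈ s, g * x * g ∈ Subgroup.closure s) :
    g ∈ normalizer (Subgroup.closure s : Set H) := by
  have hinv : g⁻¹ = g := inv_eq_of_mul_eq_one_left hg
  have hconj : Subgroup.closure s ≤ (Subgroup.closure s).comap (MulAut.conj g).toMonoidHom := by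
    rw [closure_le]
    intro x hx
    simpa [hinv] using h x hx
  refine mem_normalizer_iff.2 fun x ↦ ⟨fun hx ↦ hconj hx, fun hx ↦ ?_⟩
  have hgx : g * (g * x * g⁻¹) * g⁻¹ = x :=
    calc g * (g * x * g⁻¹) * g⁻¹ = g * g * x * (g * g)⁻¹ := by group
      _ = x := by rw [hg, one_mul, inv_one, mul_one]
  exact hgx ▸ hconj hx

theorem mem_closure_pair_of_braid {a b w : H} (ha : a * a = 1) (hb : b * b = 1)
    (hab : a * b * a = b * a * b) (hw : w ∈ Subgroup.closure {a, b}) :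
    w ∈ ({1, a, b, a * b, b * a, a * b * a} : Set H) := by
  have haa (x : H) : a * (a * x) = x := by rw [← mul_assoc, ha, one_mul]
  have hbb (x : H) : b * (b * x) = x := by rw [← mul_assoc, hb, one_mul]
  have hbab : b * (a * b) = a * (b * a) := by simpa only [mul_assoc] using hab.symm
  have hbaba : b * (a * (b * a)) = a * b := by rw [← hbab, hbb]
  have hmul_left {x y : H} (hx : x ∈ ({a, b} : Set H))
      (hy : y ∈ ({1, a, b, a * b, b * a, a * b * a} : Set H)) :
      x * y ∈ ({1, a, b, a * b, b * a, a * b * a} : Set H) := by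
    simp only [Set.mem_insert_iff, Set.mem_singleton_iff] at hx hy ⊢
    rcases hx with rfl | rfl <;> rcases hy with rfl | rfl | rfl | rfl | rfl | rfl <;>
      simp [mul_assoc, *]
  induction hw using closure_induction_left with
  | one => exact Set.mem_insert _ _
  | mul_left x hx y _ hy => exact hmul_left hx hy
  | inv_mul_cancel x hx y _ hy =>
    have hinv : x⁻¹ = x := by
      rcases hx with rfl | rfl <;> exact inv_eq_of_mul_eq_one_left ‹_›
    exact hinv.symm ▸ hmul_left hx hy

theorem zpow_apply_of_forall_apply_eq_add {E : Type*} [AddGroup E] {σ : Perm E} {v : E}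
    (hσ : ∀ x, σ x = v + x) (n : ℤ) (x : E) : (σ ^ n) x = n • v + x := by
  have h : σ = (AddAction.toPermHom E E v).toMul := Equiv.ext hσ
  rw [h, ← toMul_zsmul, ← map_zsmul]
  rfl

theorem zpow_mul_zpow_apply_eq_self_iff {α : Type*} {σ τ : Perm α} {x : α} (hσ : σ ^ 2 = 1)
    (hτ : τ ^ 2 = 1) (hσx : σ x ≠ x) (hτx : τ x ≠ x) (hστx : σ (τ x) ≠ x) {i j : ℤ} :
    (σ ^ i * τ ^ j) x = x ↔ Even i ∧ Even j := by
  rw [zpow_eq_zpow_emod' i hσ, zpow_eq_zpow_emod' j hτ, Int.even_iff, Int.even_iff]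
  rcases Int.emod_two_eq_zero_or_one i with hi | hi <;>
    rcases Int.emod_two_eq_zero_or_one j with hj | hj <;>
    simp [hi, hj, hσx, hτx, hστx]

theorem closure_range_swap {α : Type*} [Finite α] [DecidableEq α] (x : α) :
    Subgroup.closure (Set.range (swap x)) = ⊤ := by
  rw [eq_top_iff, ← Perm.closure_isSwap, closure_le]
  rintro _ ⟨y, z, -, rfl⟩
  exact SubmonoidClass.swap_mem_trans _ (swap_comm x y ▸ subset_closure ⟨y, rfl⟩)
    (subset_closure ⟨z, rfl⟩)

end Generalities

/-- Three elements of a group satisfying the defining relations of `TriangleGroup`. -/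
structure IsTriangleTriple {H : Type*} [Group H] (a b c : H) : Prop where
  a_mul_a : a * a = 1
  b_mul_b : b * b = 1
  c_mul_c : c * c = 1
  aba : a * b * a = b * a * b
  bcb : b * c * b = c * b * c
  cac : c * a * c = a * c * a

/-- The product of the reflections `a` and `bcb`, whose axes are parallel in the affine plane. Its
companion is `translation b a c`: the two span the translation lattice. -/
def translation {H : Type*} [Group H] (a b c : H) : H := a * (b * c * b)

/-- The subgroup generated by `t = translation a b c` and `v = translation b a c`; a triangle triple
generates a group in which it is normal. -/
def translationSubgroup {H : Type*} [Group H] (a b c : H) : Subgroup H :=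
  Subgroup.closure {translation a b c, translation b a c}

theorem translationSubgroup_swap {H : Type*} [Group H] (a b c : H) :
    translationSubgroup b a c = translationSubgroup a b c :=
  congrArg Subgroup.closure (Set.pair_comm _ _)

namespace IsTriangleTriple

variable {H : Type*} [Group H] {a b c : H}

theorem swap (h : IsTriangleTriple a b c) : IsTriangleTriple b a c :=
  ⟨h.b_mul_b, h.a_mul_a, h.c_mul_c, h.aba.symm, h.cac.symm, h.bcb.symm⟩

theorem translation_mul_translation (h : IsTriangleTriple a b c) :
    translation a b c * translation b a c = a * b * a * c :=
  calc a * (b * c * b) * (b * (a * c * a))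
    _ = a * b * c * (b * b) * (a * c * a) := by group
    _ = a * b * c * (c * a * c) := by rw [h.b_mul_b, mul_one, h.cac]
    _ = a * b * (c * c) * (a * c) := by group
    _ = a * b * a * c := by rw [h.c_mul_c, mul_one, ← mul_assoc]

theorem commute_translation (h : IsTriangleTriple a b c) :
    Commute (translation a b c) (translation b a c) := by
  rw [commute_iff_eq, h.translation_mul_translation, h.swap.translation_mul_translation, h.aba]

theorem a_mul_translation_mul_a (h : IsTriangleTriple a b c) :
    a * translation a b c * a = (translation a b c)⁻¹ := by
  rw [eq_inv_iff_mul_eq_one]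
  calc a * (a * (b * c * b)) * a * (a * (b * c * b))
    _ = (a * a) * b * c * b * (a * a) * b * c * b := by group
    _ = b * c * (b * b) * c * b := by rw [h.a_mul_a]; group
    _ = b * (c * c) * b := by rw [h.b_mul_b]; group
    _ = 1 := by rw [h.c_mul_c, mul_one, h.b_mul_b]

theorem b_mul_translation_mul_b (h : IsTriangleTriple a b c) :
    b * translation a b c * b = translation a b c * translation b a c :=
  calc b * (a * (b * c * b)) * b
    _ = b * a * b * c * (b * b) := by group
    _ = a * b * a * c := by rw [h.b_mul_b, mul_one, h.aba]
    _ = translation a b c * translation b a c := h.translation_mul_translation.symm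

theorem c_eq (h : IsTriangleTriple a b c) : c = b * a * translation a b c * b :=
  calc c = (b * b) * c * (b * b) := by rw [h.b_mul_b, one_mul, mul_one]
    _ = b * (a * a) * b * c * b * b := by rw [h.a_mul_a]; group
    _ = b * a * translation a b c * b := by rw [translation]; group

theorem mem_normalizer_translationSubgroup (h : IsTriangleTriple a b c) :
    a ∈ normalizer (translationSubgroup a b c : Set H) := by
  have ht : translation a b c ∈ translationSubgroup a b c := subset_closure (Set.mem_insert _ _)
  have hv : translation b a c ∈ translationSubgroup a b c :=
    subset_closure (Set.mem_insert_of_mem _ rfl)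
  refine mem_normalizer_closure_of_mul_self h.a_mul_a ?_
  rintro _ (rfl | rfl)
  · exact h.a_mul_translation_mul_a ▸ inv_mem ht
  · exact h.swap.b_mul_translation_mul_b ▸ mul_mem hv ht

theorem closure_pair_le_normalizer_translationSubgroup (h : IsTriangleTriple a b c) :
    Subgroup.closure {a, b} ≤ normalizer (translationSubgroup a b c : Set H) := by
  rw [closure_le, Set.pair_subset_iff]
  exact ⟨h.mem_normalizer_translationSubgroup,
    translationSubgroup_swap a b c ▸ h.swap.mem_normalizer_translationSubgroup⟩

theorem closure_le_translationSubgroup_sup (h : IsTriangleTriple a b c) :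
    Subgroup.closure {a, b, c} ≤ translationSubgroup a b c ⊔ Subgroup.closure {a, b} := by
  have ha : a ∈ translationSubgroup a b c ⊔ Subgroup.closure {a, b} :=
    mem_sup_right (subset_closure (Set.mem_insert _ _))
  have hb : b ∈ translationSubgroup a b c ⊔ Subgroup.closure {a, b} :=
    mem_sup_right (subset_closure (Set.mem_insert_of_mem _ rfl))
  have ht : translation a b c ∈ translationSubgroup a b c ⊔ Subgroup.closure {a, b} :=
    mem_sup_left (subset_closure (Set.mem_insert _ _))
  have hc : c ∈ translationSubgroup a b c ⊔ Subgroup.closure {a, b} := by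
    have hbatb := mul_mem (mul_mem (mul_mem hb ha) ht) hb
    rwa [← h.c_eq] at hbatb
  rw [closure_le]
  rintro _ (rfl | rfl | rfl)
  exacts [ha, hb, hc]

theorem exists_eq_mul_of_closure_eq_top (h : IsTriangleTriple a b c)
    (hgen : Subgroup.closure {a, b, c} = ⊤) (g : H) :
    ∃ n, ∃ w ∈ Subgroup.closure {a, b}, g = zpowPairHom h.commute_translation n * w := by
  have hsup : translationSubgroup a b c ⊔ Subgroup.closure {a, b} = ⊤ :=
    top_le_iff.1 (hgen ▸ h.closure_le_translationSubgroup_sup)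
  have hnormal : (translationSubgroup a b c).Normal := by
    rw [← normalizer_eq_top_iff, ← top_le_iff, ← hsup]
    exact sup_le le_normalizer h.closure_pair_le_normalizer_translationSubgroup
  obtain ⟨x, hx, w, hw, rfl⟩ := mem_sup_of_normal_left.1 (hsup ▸ mem_top g)
  obtain ⟨n, rfl⟩ := closure_pair_le_range_zpowPairHom h.commute_translation hx
  exact ⟨n, w, hw, rfl⟩

theorem freeGroupLift_eq_one (h : IsTriangleTriple a b c) :
    ∀ r ∈ stmt19Rels, FreeGroup.lift ![a, b, c] r = 1 := by
  rintro r (rfl | rfl | rfl | rfl | rfl | rfl)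
  · simpa [pow_two] using h.a_mul_a
  · simpa [pow_two] using h.b_mul_b
  · simpa [pow_two] using h.c_mul_c
  · simpa [-mul_inv_rev, mul_inv_eq_one] using h.aba
  · simpa [-mul_inv_rev, mul_inv_eq_one] using h.bcb
  · simpa [-mul_inv_rev, mul_inv_eq_one] using h.cac

/-- The homomorphism out of the presented group given by its universal property. -/
def lift (h : IsTriangleTriple a b c) : TriangleGroup →* H :=
  PresentedGroup.toGroup h.freeGroupLift_eq_one

theorem lift_gen_zero (h : IsTriangleTriple a b c) : h.lift (gen 0) = a := by
  simp [lift]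

theorem lift_gen_one (h : IsTriangleTriple a b c) : h.lift (gen 1) = b := by
  simp [lift]

theorem lift_gen_two (h : IsTriangleTriple a b c) : h.lift (gen 2) = c := by
  simp [lift]

end IsTriangleTriple

theorem isTriangleTriple_gen : IsTriangleTriple (gen 0) (gen 1) (gen 2) := by
  have hrel {r : FreeGroup (Fin 3)} (hr : r ∈ stmt19Rels) : PresentedGroup.mk stmt19Rels r = 1 :=
    PresentedGroup.one_of_mem hr
  constructor
  · exact (pow_two _).symm.trans (hrel (r := .of 0 ^ 2) (by simp [stmt19Rels]))
  · exact (pow_two _).symm.trans (hrel (r := .of 1 ^ 2) (by simp [stmt19Rels]))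
  · exact (pow_two _).symm.trans (hrel (r := .of 2 ^ 2) (by simp [stmt19Rels]))
  · exact mul_inv_eq_one.1 (hrel
      (r := .of 0 * .of 1 * .of 0 * (.of 1 * .of 0 * .of 1)⁻¹) (by simp [stmt19Rels]))
  · exact mul_inv_eq_one.1 (hrel
      (r := .of 1 * .of 2 * .of 1 * (.of 2 * .of 1 * .of 2)⁻¹) (by simp [stmt19Rels]))
  · exact mul_inv_eq_one.1 (hrel
      (r := .of 2 * .of 0 * .of 2 * (.of 0 * .of 2 * .of 0)⁻¹) (by simp [stmt19Rels]))

theorem closure_gen : Subgroup.closure {gen 0, gen 1, gen 2} = ⊤ := by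
  rw [eq_top_iff]
  refine fun g _ ↦ PresentedGroup.generated_by _ _ (fun i ↦ subset_closure ?_) g
  fin_cases i <;> simp

/-- The homomorphism `ℤ² → TriangleGroup` onto the translation subgroup. -/
def translationHom : Multiplicative (Fin 2 → ℤ) →* TriangleGroup :=
  zpowPairHom isTriangleTriple_gen.commute_translation

theorem IsTriangleTriple.lift_translationHom {H : Type*} [Group H] {a b c : H}
    (h : IsTriangleTriple a b c) (n : Multiplicative (Fin 2 → ℤ)) :
    h.lift (translationHom n) = zpowPairHom h.commute_translation n := by
  simp only [translationHom, zpowPairHom_apply, translation, map_mul, map_zpow, lift_gen_zero,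
    lift_gen_one, lift_gen_two]

section ReflectionRepresentation

/-- The reflection of `ℤ³` in `x₀ = x₁`, representing the generator `a`. -/
def reflectionA : Perm (Fin 3 → ℤ) :=
  Function.Involutive.toPerm (fun x ↦ ![x 1, x 0, x 2]) fun x ↦ by
    ext i; fin_cases i <;> simp

/-- The reflection of `ℤ³` in `x₁ = x₂`, representing `b`. -/
def reflectionB : Perm (Fin 3 → ℤ) :=
  Function.Involutive.toPerm (fun x ↦ ![x 0, x 2, x 1]) fun x ↦ by
    ext i; fin_cases i <;> simp

/-- The reflection of `ℤ³` in the affine plane `x₂ - x₀ = 1`, representing `c`. -/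
def reflectionC : Perm (Fin 3 → ℤ) :=
  Function.Involutive.toPerm (fun x ↦ ![x 2 - 1, x 1, x 0 + 1]) fun x ↦ by
    ext i; fin_cases i <;> simp

theorem reflectionA_apply (x : Fin 3 → ℤ) : reflectionA x = ![x 1, x 0, x 2] := rfl

theorem reflectionB_apply (x : Fin 3 → ℤ) : reflectionB x = ![x 0, x 2, x 1] := rfl

theorem reflectionC_apply (x : Fin 3 → ℤ) : reflectionC x = ![x 2 - 1, x 1, x 0 + 1] := rfl

theorem isTriangleTriple_reflection :
    IsTriangleTriple reflectionA reflectionB reflectionC := by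
  constructor <;> ext x i <;> fin_cases i <;>
    simp [reflectionA_apply, reflectionB_apply, reflectionC_apply]

theorem translation_reflectionA_reflectionB_apply (x : Fin 3 → ℤ) :
    translation reflectionA reflectionB reflectionC x = ![1, -1, 0] + x := by
  ext i
  fin_cases i <;>
    simp [translation, reflectionA_apply, reflectionB_apply, reflectionC_apply, sub_eq_neg_add,
      add_comm]

theorem translation_reflectionB_reflectionA_apply (x : Fin 3 → ℤ) :
    translation reflectionB reflectionA reflectionC x = ![0, 1, -1] + x := by
  ext i
  fin_cases i <;>
    simp [translation, reflectionA_apply, reflectionB_apply, reflectionC_apply, sub_eq_neg_add,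
      add_comm]

theorem lift_reflection_translationHom_apply_zero (n : Multiplicative (Fin 2 → ℤ)) :
    isTriangleTriple_reflection.lift (translationHom n) 0 =
      ![n.toAdd 0, n.toAdd 1 - n.toAdd 0, -n.toAdd 1] := by
  rw [IsTriangleTriple.lift_translationHom, zpowPairHom_apply, Perm.mul_apply,
    zpow_apply_of_forall_apply_eq_add translation_reflectionA_reflectionB_apply,
    zpow_apply_of_forall_apply_eq_add translation_reflectionB_reflectionA_apply]
  ext i
  fin_cases i <;> simp [sub_eq_neg_add]

theorem translationHom_injective : Function.Injective translationHom := by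
  intro m n hmn
  have h : ![m.toAdd 0, m.toAdd 1 - m.toAdd 0, -m.toAdd 1] =
      ![n.toAdd 0, n.toAdd 1 - n.toAdd 0, -n.toAdd 1] := by
    rw [← lift_reflection_translationHom_apply_zero, hmn,
      lift_reflection_translationHom_apply_zero]
  apply Multiplicative.toAdd.injective
  ext i
  fin_cases i
  · simpa using congrFun h 0
  · simpa using congrFun h 2

end ReflectionRepresentation

section PermRepresentation

theorem isTriangleTriple_swap :
    IsTriangleTriple (swap 0 1 : Perm (Fin 4)) (swap 1 2) (swap 1 3) := by
  constructor <;> decide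

/-- The homomorphism of the theorem, `a ↦ (0 1)`, `b ↦ (1 2)`, `c ↦ (1 3)`. -/
def permHom : TriangleGroup →* Perm (Fin 4) := isTriangleTriple_swap.lift

theorem permHom_gen_zero : permHom (gen 0) = swap 0 1 := isTriangleTriple_swap.lift_gen_zero

theorem permHom_gen_one : permHom (gen 1) = swap 1 2 := isTriangleTriple_swap.lift_gen_one

theorem permHom_gen_two : permHom (gen 2) = swap 1 3 := isTriangleTriple_swap.lift_gen_two

theorem permHom_surjective : Function.Surjective permHom := by
  rw [← MonoidHom.range_eq_top, eq_top_iff, ← closure_range_swap 1, closure_le]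
  rintro _ ⟨i, rfl⟩
  fin_cases i
  · exact ⟨gen 0, permHom_gen_zero.trans (swap_comm 0 1)⟩
  · exact swap_self (1 : Fin 4) ▸ one_mem permHom.range
  · exact ⟨gen 1, permHom_gen_one⟩
  · exact ⟨gen 2, permHom_gen_two⟩

theorem permHom_apply_three_of_mem_closure_pair {w : TriangleGroup}
    (hw : w ∈ Subgroup.closure {gen 0, gen 1}) : permHom w 3 = 3 := by
  suffices Subgroup.closure {gen 0, gen 1} ≤
      (MulAction.stabilizer (Perm (Fin 4)) (3 : Fin 4)).comap permHom from this hw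
  rw [closure_le, Set.pair_subset_iff]
  simp only [SetLike.mem_coe, mem_comap, permHom_gen_zero, permHom_gen_one]
  decide

theorem eq_one_of_mem_closure_pair_of_permHom_eq_one {w : TriangleGroup}
    (hw : w ∈ Subgroup.closure {gen 0, gen 1}) (h : permHom w = 1) : w = 1 := by
  obtain rfl | rfl | rfl | rfl | rfl | rfl := mem_closure_pair_of_braid
    isTriangleTriple_gen.a_mul_a isTriangleTriple_gen.b_mul_b isTriangleTriple_gen.aba hw
  · rfl
  all_goals
    simp only [map_mul, permHom_gen_zero, permHom_gen_one] at h
    exact absurd h (by decide)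

theorem permHom_translationHom_apply_three_eq_self_iff (n : Multiplicative (Fin 2 → ℤ)) :
    permHom (translationHom n) 3 = 3 ↔ Even (n.toAdd 0) ∧ Even (n.toAdd 1) := by
  rw [permHom, IsTriangleTriple.lift_translationHom, zpowPairHom_apply]
  exact zpow_mul_zpow_apply_eq_self_iff (by decide) (by decide) (by decide) (by decide) (by decide)

theorem permHom_translationHom_sq (n : Multiplicative (Fin 2 → ℤ)) :
    permHom (translationHom (n ^ 2)) = 1 := by
  rw [permHom, IsTriangleTriple.lift_translationHom]
  exact zpowPairHom_sq_eq_one _ (by decide) (by decide) n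

theorem exists_eq_sq_of_permHom_translationHom_apply_three {n : Multiplicative (Fin 2 → ℤ)}
    (hn : permHom (translationHom n) 3 = 3) : ∃ m, n = m ^ 2 := by
  obtain ⟨⟨i, hi⟩, ⟨j, hj⟩⟩ := (permHom_translationHom_apply_three_eq_self_iff n).1 hn
  refine ⟨.ofAdd ![i, j], Multiplicative.toAdd.injective ?_⟩
  ext k
  fin_cases k <;> simp [hi, hj, two_mul]

theorem exists_eq_translationHom_sq_of_permHom_eq_one {g : TriangleGroup} (hg : permHom g = 1) :
    ∃ m, g = translationHom (m ^ 2) := by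
  obtain ⟨n, w, hw, rfl⟩ := isTriangleTriple_gen.exists_eq_mul_of_closure_eq_top closure_gen g
  rw [← translationHom] at hg ⊢
  have hfix : permHom (translationHom n) 3 = 3 := by
    rw [← permHom_apply_three_of_mem_closure_pair hw, ← Perm.mul_apply, ← map_mul, hg,
      Perm.one_apply, permHom_apply_three_of_mem_closure_pair hw]
  obtain ⟨m, rfl⟩ := exists_eq_sq_of_permHom_translationHom_apply_three hfix
  rw [map_mul, permHom_translationHom_sq, one_mul] at hg
  exact ⟨m, by rw [eq_one_of_mem_closure_pair_of_permHom_eq_one hw hg, mul_one]⟩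

theorem ker_permHom : permHom.ker = (translationHom.comp (powMonoidHom 2)).range := by
  ext g
  constructor
  · intro hg
    obtain ⟨m, rfl⟩ := exists_eq_translationHom_sq_of_permHom_eq_one hg
    exact ⟨m, rfl⟩
  · rintro ⟨m, rfl⟩
    exact permHom_translationHom_sq m

/-- The kernel is `T²`, hence free abelian of rank two like the translation subgroup `T`. -/
noncomputable def kerPermHomEquiv : permHom.ker ≃* Multiplicative (Fin 2 → ℤ) :=
  (MulEquiv.subgroupCongr ker_permHom).trans <| MulEquiv.symm <| MonoidHom.ofInjective <|
    translationHom_injective.comp (pow_left_injective two_ne_zero)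

end PermRepresentation

end TriangleGroup

theorem stmt_19 :
    ∃ f : PresentedGroup stmt19Rels →* Equiv.Perm (Fin 4),
      Function.Surjective f ∧
      f (PresentedGroup.of 0) = Equiv.swap 0 1 ∧
      f (PresentedGroup.of 1) = Equiv.swap 1 2 ∧
      f (PresentedGroup.of 2) = Equiv.swap 1 3 ∧
      ∃ m : ℕ, Nonempty (f.ker ≃* Multiplicative (Fin m → ℤ)) :=
  ⟨TriangleGroup.permHom, TriangleGroup.permHom_surjective, TriangleGroup.permHom_gen_zero,
    TriangleGroup.permHom_gen_one, TriangleGroup.permHom_gen_two, 2,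
    ⟨TriangleGroup.kerPermHomEquiv⟩⟩
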